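/- Let n ≥ 1, let P be a column-stochastic n×n real matrix, let 0 < α < 1, and let v ∈ ℝⁿ have non-negative entries with eᵀv = 1. Set A = αP + (1−α)v eᵀ. If μ ∈ ℂ is an eigenvalue of A (viewed as a complex matrix) with μ ≠ 1, then μ/α is an eigenvalue of P. -/

import Mathlib

/-!
`eᵀ` is a left eigenvector of `A` for the eigenvalue `1`, so it annihilates every right eigenvector
`x` of `A` for an eigenvalue `μ ≠ 1`. The rank-one part of `A` then kills `x`, leaving
`α P x = A x = μ x`.

This is the case `M = α P`, `w = e` of Brauer's theorem: if `wᵀ M = c wᵀ`, the rank-one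
perturbation `M + u wᵀ` only moves the eigenvalue `c`, to `c + wᵀ u`.
-/

open Matrix

section LeftEigenvectors

variable {ι R : Type*} [Fintype ι] [CommRing R] {M : Matrix ι ι R} {u w x : ι → R} {c μ : R}

theorem dotProduct_eq_zero_of_vecMul_eq_smul_of_mulVec_eq_smul [NoZeroDivisors R]
    (hw : w ᵥ* M = c • w) (hx : M *ᵥ x = μ • x) (hμ : μ ≠ c) : w ⬝ᵥ x = 0 := by
  have h : μ * (w ⬝ᵥ x) = c * (w ⬝ᵥ x) := by
    calc μ * (w ⬝ᵥ x) = w ⬝ᵥ M *ᵥ x := by rw [hx, dotProduct_smul, smul_eq_mul]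
      _ = w ᵥ* M ⬝ᵥ x := dotProduct_mulVec w M x
      _ = c * (w ⬝ᵥ x) := by rw [hw, smul_dotProduct, smul_eq_mul]
  exact (mul_eq_mul_right_iff.mp h).resolve_left hμ

theorem vecMul_add_vecMulVec_eq_smul (hw : w ᵥ* M = c • w) :
    w ᵥ* (M + vecMulVec u w) = (c + w ⬝ᵥ u) • w := by
  rw [vecMul_add, hw, vecMul_vecMulVec, add_smul]

theorem mulVec_eq_smul_of_add_vecMulVec_mulVec_eq_smul [NoZeroDivisors R]
    (hw : w ᵥ* M = c • w) (hx : (M + vecMulVec u w) *ᵥ x = μ • x) (hμ : μ ≠ c + w ⬝ᵥ u) :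
    M *ᵥ x = μ • x := by
  have hwx : w ⬝ᵥ x = 0 :=
    dotProduct_eq_zero_of_vecMul_eq_smul_of_mulVec_eq_smul (vecMul_add_vecMulVec_eq_smul hw) hx hμ
  simpa only [add_mulVec, vecMulVec_mulVec, hwx, MulOpposite.op_zero, zero_smul, add_zero] using hx

end LeftEigenvectors

section CharpolyRoots

variable {ι : Type*} [Fintype ι] [DecidableEq ι]

theorem mem_roots_charpoly_iff_exists_mulVec_eq_smul {R : Type*} [CommRing R] [IsDomain R]
    {M : Matrix ι ι R} {μ : R} :
    μ ∈ M.charpoly.roots ↔ ∃ x ≠ 0, M *ᵥ x = μ • x := by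
  rw [Polynomial.mem_roots M.charpoly_monic.ne_zero, Polynomial.IsRoot.def, eval_charpoly,
    ← exists_mulVec_eq_zero_iff]
  simp only [sub_mulVec, scalar_apply, ← smul_one_eq_diagonal, smul_mulVec, one_mulVec,
    sub_eq_zero, eq_comm]

theorem mem_roots_charpoly_of_mem_roots_charpoly_add_vecMulVec {R : Type*} [CommRing R]
    [IsDomain R] {M : Matrix ι ι R} {u w : ι → R} {c μ : R} (hw : w ᵥ* M = c • w)
    (hμ : μ ∈ (M + vecMulVec u w).charpoly.roots) (hμc : μ ≠ c + w ⬝ᵥ u) :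
    μ ∈ M.charpoly.roots := by
  rw [mem_roots_charpoly_iff_exists_mulVec_eq_smul] at hμ ⊢
  obtain ⟨x, hx0, hx⟩ := hμ
  exact ⟨x, hx0, mulVec_eq_smul_of_add_vecMulVec_mulVec_eq_smul hw hx hμc⟩

theorem mem_roots_charpoly_smul_iff {K : Type*} [Field K] {M : Matrix ι ι K} {a μ : K}
    (ha : a ≠ 0) : μ ∈ (a • M).charpoly.roots ↔ μ / a ∈ M.charpoly.roots := by
  simp only [mem_roots_charpoly_iff_exists_mulVec_eq_smul, smul_mulVec, div_eq_inv_mul, mul_smul,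
    eq_inv_smul_iff₀ ha]

end CharpolyRoots

section GoogleMatrix

variable {ι R : Type*}

/-- The Google matrix `α P + (1 - α) v eᵀ` with link matrix `P`, damping factor `α` and
teleportation vector `v`. The stochasticity of `P` and `v` is not part of the definition, so that it
makes sense over any commutative ring. -/
def googleMatrix [CommRing R] (α : R) (P : Matrix ι ι R) (v : ι → R) : Matrix ι ι R :=
  α • P + (1 - α) • vecMulVec v 1

theorem googleMatrix_map {S : Type*} [CommRing R] [CommRing S] (f : R →+* S) (α : R)
    (P : Matrix ι ι R) (v : ι → R) :
    (googleMatrix α P v).map f = googleMatrix (f α) (P.map f) (f ∘ v) := by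
  ext i j
  simp [googleMatrix]

theorem google_eigenvalue_shift_general {K : Type*} [Fintype ι] [DecidableEq ι] [Field K]
    {P : Matrix ι ι K} (hP : ∀ j, ∑ i, P i j = 1) {α : K} (hα : α ≠ 0)
    {v : ι → K} (hv : ∑ i, v i = 1) {μ : K}
    (hμ : μ ∈ (googleMatrix α P v).charpoly.roots) (hμ1 : μ ≠ 1) :
    μ / α ∈ P.charpoly.roots := by
  have h_left : 1 ᵥ* (α • P) = α • (1 : ι → K) := by
    ext j
    simp [vecMul, dotProduct, ← Finset.mul_sum, hP]
  have h_moved : α + 1 ⬝ᵥ ((1 - α) • v) = 1 := by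
    rw [dotProduct_smul, one_dotProduct, hv, smul_eq_mul, mul_one, add_sub_cancel]
  rw [googleMatrix, ← smul_vecMulVec] at hμ
  rw [← mem_roots_charpoly_smul_iff hα]
  exact mem_roots_charpoly_of_mem_roots_charpoly_add_vecMulVec h_left hμ (h_moved.symm ▸ hμ1)

end GoogleMatrix

/-- If `μ ≠ 1` is a complex eigenvalue of the Google matrix
`A = α•P + (1-α)•v eᵀ`, then `μ/α` is an eigenvalue of `P`. -/
theorem google_eigenvalue_shift (n : ℕ) (hn : 1 ≤ n)
    (P : Matrix (Fin n) (Fin n) ℝ)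
    (hPnonneg : ∀ i j, 0 ≤ P i j) (hPcol : ∀ j, ∑ i, P i j = 1)
    (α : ℝ) (hα0 : 0 < α) (hα1 : α < 1)
    (v : Fin n → ℝ) (hvnonneg : ∀ i, 0 ≤ v i) (hvsum : ∑ i, v i = 1)
    (A : Matrix (Fin n) (Fin n) ℝ)
    (hA : A = α • P + (1 - α) • Matrix.vecMulVec v (fun _ => (1 : ℝ)))
    (μ : ℂ) (hμ : μ ∈ ((A.map (fun x : ℝ => (x : ℂ))).charpoly).roots)
    (hμ1 : μ ≠ 1) :
    μ / (α : ℂ) ∈ ((P.map (fun x : ℝ => (x : ℂ))).charpoly).roots := by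
  rw [show A = googleMatrix α P v from hA] at hμ
  exact google_eigenvalue_shift_general (fun j ↦ by simp [← Complex.ofReal_sum, hPcol j])
    (mod_cast hα0.ne') (by simp [← Complex.ofReal_sum, hvsum])
    (googleMatrix_map Complex.ofRealHom α P v ▸ hμ) hμ1
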